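/- Let A be a commutative noetherian local ring that is complete with respect to its maximal ideal. If the Krull dimension of A is at least 2, then there exists an uncountable family of elements (a_u)_{u ∈ U} of A such that for all u ≠ v the radical of the principal ideal (a_u) differs from the radical of the principal ideal (a_v). -/

import Mathlib

open IsLocalRing in
theorem aux_step (A : Type) [CommRing A] [IsNoetherianRing A] [IsLocalRing A]
    (P : Ideal A) (hP : P.IsPrime) (hm : ¬ maximalIdeal A ≤ P) (x : A) (k : ℕ) :
    ∃ (y : A) (l : ℕ), k < l ∧ y - x ∈ maximalIdeal A ^ k ∧
      ∀ z, z - y ∈ maximalIdeal A ^ l → z ∉ P := by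
  have h1 : ∃ y, y - x ∈ maximalIdeal A ^ k ∧ y ∉ P := by
    by_cases hx : x ∈ P
    · have : ¬ maximalIdeal A ^ k ≤ P := fun h => hm (hP.le_of_pow_le h)
      obtain ⟨t, ht, htP⟩ := SetLike.not_le_iff_exists.1 this
      refine ⟨x + t, by simpa using ht, fun h => htP ?_⟩
      simpa using P.sub_mem h hx
    · exact ⟨x, by simp, hx⟩
  obtain ⟨y, hy, hyP⟩ := h1
  have h2 := Ideal.iInf_pow_smul_eq_bot_of_isLocalRing (R := A) (M := A ⧸ P) (maximalIdeal A)
    (Ideal.IsPrime.ne_top inferInstance)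
  have h3 : ∃ l, Ideal.Quotient.mk P y ∉ (maximalIdeal A ^ l • ⊤ : Submodule A (A ⧸ P)) := by
    by_contra! hc
    have : Ideal.Quotient.mk P y ∈ (⨅ i : ℕ, maximalIdeal A ^ i • ⊤ : Submodule A (A ⧸ P)) := by
      simpa [Submodule.mem_iInf] using hc
    rw [h2] at this
    exact hyP (Ideal.Quotient.eq_zero_iff_mem.1 (by simpa using this))
  obtain ⟨l, hl⟩ := h3
  refine ⟨y, max l (k+1), by omega, hy, fun z hz hzP => hl ?_⟩
  have hz' := Ideal.pow_le_pow_right (le_max_left l (k+1)) hz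
  have e : Ideal.Quotient.mk P y = (-(z - y)) • (1 : A ⧸ P) := by
    rw [Algebra.smul_def, mul_one]
    have : Ideal.Quotient.mk P z = 0 := Ideal.Quotient.eq_zero_iff_mem.2 hzP
    simp [this]
  rw [e]
  exact Submodule.smul_mem_smul (neg_mem hz') trivial

open IsLocalRing in
theorem aux_avoid (A : Type) [CommRing A] [IsNoetherianRing A] [IsLocalRing A]
    [IsAdicComplete (maximalIdeal A) A]
    (P : ℕ → Ideal A) (hP : ∀ n, (P n).IsPrime) (hm : ∀ n, ¬ maximalIdeal A ≤ P n) :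
    ∃ x ∈ maximalIdeal A, ∀ n, x ∉ P n := by
  choose f g hfg hf hg using fun n (p : A × ℕ) => aux_step A (P n) (hP n) (hm n) p.1 p.2
  let s : ℕ → A × ℕ := fun n => Nat.rec (0, 1) (fun n p => (f n p, g n p)) n
  have s1 : ∀ n, (s n).2 < (s (n+1)).2 := fun n => hfg n (s n)
  have s2 : ∀ n, (s (n+1)).1 - (s n).1 ∈ maximalIdeal A ^ (s n).2 := fun n => hf n (s n)
  have s3 : ∀ n z, z - (s (n+1)).1 ∈ maximalIdeal A ^ (s (n+1)).2 → z ∉ P n :=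
    fun n => hg n (s n)
  have sm : StrictMono fun n => (s n).2 := strictMono_nat_of_lt_succ s1
  have s4 : ∀ n j, n ≤ j → (s j).1 - (s n).1 ∈ maximalIdeal A ^ (s n).2 := by
    intro n j hj
    induction j, hj using Nat.le_induction with
    | base => simp
    | succ j hj ih =>
      have := add_mem (Ideal.pow_le_pow_right (sm.monotone hj) (s2 j)) ih
      simpa using this
  have hid : ∀ n, n ≤ (s n).2 := sm.id_le
  obtain ⟨L, hL⟩ := IsPrecomplete.prec (I := maximalIdeal A) (M := A) inferInstance
    (f := fun n => (s n).1) (by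
      intro m n hmn
      rw [SModEq.sub_mem, smul_eq_mul, Ideal.mul_top, ← neg_mem_iff, neg_sub]
      exact Ideal.pow_le_pow_right (hid m) (s4 m n hmn))
  have hL' : ∀ n, L - (s n).1 ∈ maximalIdeal A ^ (s n).2 := by
    intro n
    have h1 := hL (s n).2
    rw [SModEq.sub_mem, smul_eq_mul, Ideal.mul_top, ← neg_mem_iff, neg_sub] at h1
    have := add_mem h1 (s4 n _ (hid n))
    simpa using this
  refine ⟨L, ?_, fun n => s3 n L (hL' (n+1))⟩
  have h0 := hL' 0
  simpa [s] using h0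

/-- Let `A` be a complete commutative noetherian local ring of Krull dimension at
least `2`. Then there is an uncountable family `(a_u)` of elements of `A` such that
the radicals of the principal ideals `(a_u)` are pairwise distinct. -/
theorem uncountable_family_with_distinct_radicals
    (A : Type) [CommRing A] [IsNoetherianRing A] [IsLocalRing A]
    [IsAdicComplete (IsLocalRing.maximalIdeal A) A]
    (h : 2 ≤ ringKrullDim A) :
    ∃ (U : Type) (a : U → A), ¬ Countable U ∧
      ∀ u v : U, u ≠ v →
        (Ideal.span {a u}).radical ≠ (Ideal.span {a v}).radical := by
  let R : Set (Ideal A) := Set.range fun a : A => (Ideal.span {a}).radical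
  have hR : ∀ u : R, ∃ a : A, (Ideal.span {a}).radical = u := fun u => u.2
  choose a ha using hR
  refine ⟨R, a, fun hc => ?_, fun u v huv e => huv (Subtype.ext (by rw [← ha, ← ha, e]))⟩
  let S : Set (Ideal A) := ⋃ I ∈ R, I.minimalPrimes
  have hS : S.Countable := Set.Countable.biUnion (Set.countable_coe_iff.1 hc) fun I _ =>
    (I.finite_minimalPrimes_of_isNoetherianRing A).countable
  have hmem : ∀ (x : A) (p : Ideal A), p ∈ (Ideal.span {x}).minimalPrimes → p ∈ S := by
    intro x p hp
    refine Set.mem_biUnion (x := (Ideal.span {x}).radical) ⟨x, rfl⟩ ?_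
    rwa [Ideal.radical_minimalPrimes]
  have hS' : ∀ p ∈ S, p.IsPrime ∧ ¬ IsLocalRing.maximalIdeal A ≤ p := by
    intro p hp
    simp only [S, Set.mem_iUnion] at hp
    obtain ⟨I, ⟨x, rfl⟩, hp⟩ := hp
    rw [Ideal.radical_minimalPrimes] at hp
    refine ⟨hp.1.1, fun hle => ?_⟩
    have := hp.1.1
    have e : IsLocalRing.maximalIdeal A = p :=
      le_antisymm hle (IsLocalRing.le_maximalIdeal this.ne_top)
    have h1 := Ideal.height_le_one_of_isPrincipal_of_mem_minimalPrimes (Ideal.span {x}) p hp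
    rw [← IsLocalRing.maximalIdeal_height_eq_ringKrullDim, e] at h
    have h2 : (2 : ℕ∞) ≤ p.height := WithBot.coe_le_coe.1 h
    exact absurd (h2.trans h1) (by decide)
  have hex : ∀ x ∈ IsLocalRing.maximalIdeal A, ∃ p ∈ S, x ∈ p := by
    intro x hx
    obtain ⟨p, hp, -⟩ := Ideal.exists_minimalPrimes_le (I := Ideal.span {x})
      (J := IsLocalRing.maximalIdeal A) (by simpa [Ideal.span_le] using hx)
    exact ⟨p, hmem x p hp, hp.1.2 (Ideal.mem_span_singleton_self x)⟩
  obtain ⟨p0, hp0, -⟩ := hex 0 (zero_mem _)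
  obtain ⟨P, hP⟩ := hS.exists_eq_range ⟨p0, hp0⟩
  have hPS : ∀ n, P n ∈ S := fun n => hP ▸ Set.mem_range_self n
  obtain ⟨x, hx, hxP⟩ := aux_avoid A P (fun n => (hS' _ (hPS n)).1) (fun n => (hS' _ (hPS n)).2)
  obtain ⟨p, hp, hxp⟩ := hex x hx
  rw [hP] at hp
  obtain ⟨n, rfl⟩ := hp
  exact hxP n hxp
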